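/- arXiv:0710.0106 — 2 statements merged into one kernel-verified Lean document; each statement's English description precedes it below -/
import Mathlib

section
/- Let q > 1/2, p = 1/q, let (X, N) be a fuzzy normed space and (Y, N′) a fuzzy normed space, and let f : X → Y be any function. If Q and Q′ are two quadratic functions from X to Y such that N′ (Q(x) − f(x)) t ≥ N x (((2^(2−p) − 1)/4)^q · t^q) and N′ (Q′(x) − f(x)) t ≥ N x (((2^(2−p) − 1)/4)^q · t^q) for all x ∈ X and all t > 0, then Q = Q′. -/
/-!
A quadratic function satisfies `Q (n • x) = n ^ 2 • Q x`, so by homogeneity of `N'` the value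
`N' (Q x) t` equals `N' (Q (n • x)) (n ^ 2 * t)` for every `n ≠ 0`. Apply this to the difference of
two quadratic functions that both approximate `f`: at `n • x` its fuzzy size is bounded below by
`N (n • x) (c * (n ^ 2 * t / 2) ^ q) = N x (c * (t / 2) ^ q * n ^ (2 * q - 1))`, which tends to `1`
as `n → ∞` because `q > 1 / 2`.
-/

open Filter Finset

/-- A fuzzy norm on a real vector space, following Bag–Samanta. -/
structure IsFuzzyNorm {X : Type*} [AddCommGroup X] [Module ℝ X] (N : X → ℝ → ℝ) : Prop where
  nonneg : ∀ (x : X) (t : ℝ), 0 ≤ N x t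
  le_one : ∀ (x : X) (t : ℝ), N x t ≤ 1
  eq_zero_of_nonpos : ∀ (x : X) (c : ℝ), c ≤ 0 → N x c = 0
  eq_zero_iff : ∀ x : X, x = 0 ↔ ∀ c : ℝ, 0 < c → N x c = 1
  smul_eq : ∀ (c : ℝ) (x : X) (t : ℝ), c ≠ 0 → N (c • x) t = N x (t / |c|)
  min_le_add : ∀ (x y : X) (s t : ℝ), min (N x s) (N y t) ≤ N (x + y) (s + t)
  mono : ∀ x : X, Monotone (N x)
  tendsto_one : ∀ x : X, Tendsto (N x) atTop (nhds 1)

/-- Convergence of a sequence to a fuzzy limit in a fuzzy normed space. -/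
def FuzzyTendsto {X : Type*} [AddCommGroup X] [Module ℝ X] (N : X → ℝ → ℝ)
    (xs : ℕ → X) (x : X) : Prop :=
  ∀ t : ℝ, 0 < t → Tendsto (fun n => N (xs n - x) t) atTop (nhds 1)

/-- Cauchy sequences in a fuzzy normed space. -/
def FuzzyCauchy {X : Type*} [AddCommGroup X] [Module ℝ X] (N : X → ℝ → ℝ)
    (xs : ℕ → X) : Prop :=
  ∀ ε : ℝ, 0 < ε → ∀ t : ℝ, 0 < t → ∃ n₀ : ℕ, ∀ n ≥ n₀, ∀ p : ℕ, 0 < p →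
    1 - ε < N (xs (n + p) - xs n) t

/-- A fuzzy normed space is complete (a fuzzy Banach space) if every Cauchy
sequence converges. -/
def IsFuzzyComplete {X : Type*} [AddCommGroup X] [Module ℝ X] (N : X → ℝ → ℝ) : Prop :=
  ∀ xs : ℕ → X, FuzzyCauchy N xs → ∃ x : X, FuzzyTendsto N xs x

/-- Quadratic functional equation. -/
def IsQuadratic {X Y : Type*} [AddCommGroup X] [AddCommGroup Y] (Q : X → Y) : Prop :=
  ∀ x y : X, Q (x + y) + Q (x - y) = 2 • Q x + 2 • Q y

/-- Additive functional equation. -/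
def IsAdditive {X Y : Type*} [AddCommGroup X] [AddCommGroup Y] (T : X → Y) : Prop :=
  ∀ x y : X, T (x + y) = T x + T y

namespace IsQuadratic

variable {X Y : Type*} [AddCommGroup X] [AddCommGroup Y] {Q Q' : X → Y}

theorem sub (hQ : IsQuadratic Q) (hQ' : IsQuadratic Q') : IsQuadratic (Q - Q') := by
  intro x y
  simp only [Pi.sub_apply, smul_sub]
  rw [sub_add_sub_comm, hQ x y, hQ' x y, add_sub_add_comm]

variable [IsAddTorsionFree Y]

theorem map_zero (hQ : IsQuadratic Q) : Q 0 = 0 := by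
  have h : Q 0 + Q 0 = 2 • Q 0 + 2 • Q 0 := by simpa only [add_zero, sub_zero] using hQ 0 0
  rw [← two_nsmul, left_eq_add] at h
  exact (nsmul_eq_zero_iff_right two_ne_zero).mp h

theorem map_nsmul (hQ : IsQuadratic Q) (n : ℕ) (x : X) : Q (n • x) = n ^ 2 • Q x := by
  induction n using Nat.twoStepInduction with
  | zero => simp [hQ.map_zero]
  | one => simp
  | more n ih ih' =>
    have h : Q ((n + 2) • x) + Q (n • x) = 2 • Q ((n + 1) • x) + 2 • Q x := by
      convert hQ ((n + 1) • x) x using 3 <;> module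
    rw [eq_sub_of_add_eq h, ih, ih']
    module

end IsQuadratic

namespace IsFuzzyNorm

section

variable {X : Type*} [AddCommGroup X] [Module ℝ X] {N : X → ℝ → ℝ}

theorem map_neg (hN : IsFuzzyNorm N) (x : X) (t : ℝ) : N (-x) t = N x t := by
  simpa using hN.smul_eq (-1) x t (by norm_num)

theorem map_nsmul (hN : IsFuzzyNorm N) {n : ℕ} (hn : n ≠ 0) (x : X) (t : ℝ) :
    N (n • x) t = N x (t / n) := by
  rw [← Nat.cast_smul_eq_nsmul ℝ, hN.smul_eq _ _ _ (Nat.cast_ne_zero.mpr hn), Nat.abs_cast]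

theorem min_le_sub (hN : IsFuzzyNorm N) (x y : X) (s t : ℝ) :
    min (N x s) (N y t) ≤ N (x - y) (s + t) := by
  simpa only [hN.map_neg, ← sub_eq_add_neg] using hN.min_le_add x (-y) s t

theorem tendsto_nsmul_rpow (hN : IsFuzzyNorm N) {c q t : ℝ} (hc : 0 < c) (hq : 1 / 2 < q)
    (ht : 0 < t) (x : X) :
    Tendsto (fun n : ℕ => N (n • x) (c * ((n : ℝ) ^ 2 * t) ^ q)) atTop (nhds 1) := by
  have hpow : Tendsto (fun n : ℕ => c * t ^ q * (n : ℝ) ^ (2 * q - 1)) atTop atTop :=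
    ((tendsto_rpow_atTop (by linarith)).comp tendsto_natCast_atTop_atTop).const_mul_atTop
      (by positivity)
  refine ((hN.tendsto_one x).comp hpow).congr' ?_
  filter_upwards [eventually_ne_atTop 0] with n hn
  have hn₀ : (0 : ℝ) < n := by positivity
  have hscale : c * ((n : ℝ) ^ 2 * t) ^ q / n = c * t ^ q * (n : ℝ) ^ (2 * q - 1) := by
    rw [Real.mul_rpow (by positivity) ht.le, ← Real.rpow_natCast_mul hn₀.le, Nat.cast_ofNat,
      Real.rpow_sub_one hn₀.ne']
    ring
  rw [Function.comp_apply, hN.map_nsmul hn, hscale]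

end

section

variable {X Y : Type*} [AddCommGroup X] [AddCommGroup Y] [Module ℝ Y] {N : Y → ℝ → ℝ} {Q : X → Y}

theorem map_quadratic_nsmul (hN : IsFuzzyNorm N) (hQ : IsQuadratic Q) {n : ℕ} (hn : n ≠ 0)
    (x : X) (t : ℝ) : N (Q (n • x)) ((n : ℝ) ^ 2 * t) = N (Q x) t := by
  have : IsAddTorsionFree Y := .of_isTorsionFree ℝ Y
  rw [hQ.map_nsmul, hN.map_nsmul (pow_ne_zero 2 hn), Nat.cast_pow,
    mul_div_cancel_left₀ t (by positivity)]

theorem quadratic_eq_zero_of_tendsto (hN : IsFuzzyNorm N) (hQ : IsQuadratic Q)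
    (hlim : ∀ x : X, ∀ t : ℝ, 0 < t →
      Tendsto (fun n : ℕ => N (Q (n • x)) ((n : ℝ) ^ 2 * t)) atTop (nhds 1)) : Q = 0 := by
  funext x
  refine (hN.eq_zero_iff _).mpr fun t ht => ?_
  refine tendsto_nhds_unique_of_eventuallyEq tendsto_const_nhds (hlim x t ht) ?_
  filter_upwards [eventually_ne_atTop 0] with n hn
  exact (hN.map_quadratic_nsmul hQ hn x t).symm

end

end IsFuzzyNorm

theorem approximation_const_pos {q : ℝ} (hq : 1 / 2 < q) :
    0 < (((2 : ℝ) ^ ((2 : ℝ) - 1 / q) - 1) / 4) ^ q := by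
  have hq' : 1 / q < 2 := (one_div_lt (by linarith) two_pos).mpr hq
  have hone : 1 < (2 : ℝ) ^ (2 - 1 / q) := Real.one_lt_rpow one_lt_two (sub_pos.mpr hq')
  exact Real.rpow_pos_of_pos (div_pos (sub_pos.mpr hone) four_pos) q

theorem fuzzy_stability_quadratic_unique_general
    {X Y : Type*} [AddCommGroup X] [AddCommGroup Y] [Module ℝ Y]
    {N : Y → ℝ → ℝ} (hN : IsFuzzyNorm N) {φ : X → ℝ → ℝ}
    (hφ : ∀ x : X, ∀ t : ℝ, 0 < t →
      Tendsto (fun n : ℕ => φ (n • x) ((n : ℝ) ^ 2 * t)) atTop (nhds 1))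
    {f Q Q' : X → Y} (hQ : IsQuadratic Q) (hQ' : IsQuadratic Q')
    (hQf : ∀ x : X, ∀ t : ℝ, 0 < t → φ x t ≤ N (Q x - f x) t)
    (hQ'f : ∀ x : X, ∀ t : ℝ, 0 < t → φ x t ≤ N (Q' x - f x) t) :
    Q = Q' := by
  have hle (x : X) {t : ℝ} (ht : 0 < t) : φ x (t / 2) ≤ N ((Q - Q') x) t := by
    have h := hN.min_le_sub (Q x - f x) (Q' x - f x) (t / 2) (t / 2)
    rw [sub_sub_sub_cancel_right, add_halves] at h
    exact (le_min (hQf x _ (half_pos ht)) (hQ'f x _ (half_pos ht))).trans h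
  refine sub_eq_zero.mp (hN.quadratic_eq_zero_of_tendsto (hQ.sub hQ') fun x t ht => ?_)
  refine tendsto_of_tendsto_of_tendsto_of_le_of_le' (hφ x (t / 2) (half_pos ht))
    tendsto_const_nhds ?_ (Eventually.of_forall fun n => hN.le_one _ _)
  filter_upwards [eventually_ne_atTop 0] with n hn
  rw [← mul_div_assoc]
  exact hle (n • x) (by positivity)

/-- Uniqueness part of the fuzzy stability theorem: two quadratic functions
satisfying the same fuzzy approximation estimate coincide. -/
theorem fuzzy_stability_quadratic_unique
    {X Y : Type*} [AddCommGroup X] [Module ℝ X] [AddCommGroup Y] [Module ℝ Y]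
    (N : X → ℝ → ℝ) (N' : Y → ℝ → ℝ)
    (hN : IsFuzzyNorm N) (hN' : IsFuzzyNorm N')
    (q p : ℝ) (hq : 1 / 2 < q) (hp : p = 1 / q)
    (f Q Q' : X → Y)
    (hQ : IsQuadratic Q) (hQ' : IsQuadratic Q')
    (hQf : ∀ x : X, ∀ t : ℝ, 0 < t →
      N x ((((2 : ℝ) ^ ((2 : ℝ) - p) - 1) / 4) ^ q * t ^ q) ≤ N' (Q x - f x) t)
    (hQ'f : ∀ x : X, ∀ t : ℝ, 0 < t →
      N x ((((2 : ℝ) ^ ((2 : ℝ) - p) - 1) / 4) ^ q * t ^ q) ≤ N' (Q' x - f x) t) :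
    Q = Q' := by
  subst hp
  exact fuzzy_stability_quadratic_unique_general hN' (fun x _ ht =>
    hN.tendsto_nsmul_rpow (approximation_const_pos hq) hq ht x) hQ hQ' hQf hQ'f
end

section
/- Let X be a real linear space, (Y, N) a fuzzy Banach space, (Z, N′) a fuzzy normed space, and φ : X × X → Z with φ(2x, 2y) = α · φ(x, y) for all x, y ∈ X, where 0 < |α| < 4. Suppose f, g, h : X → Y are even functions with f(0) = g(0) = h(0) = 0 such that N (f(x+y) + f(x−y) − 2g(x) − 2h(y)) t ≥ N′ (φ(x, y)) t for all x, y ∈ X and all t ∈ ℝ. Then there exists a unique quadratic mapping Q : X → Y such that N (Q(x) − f(x)) t ≥ N″ x (((4 − |α|)/16) · t), N (Q(x) − g(x)) t ≥ N″ x (((12 − 3|α|)/(52 − |α|)) · t), and N (Q(x) − h(x)) t ≥ N″ x (((12 − 3|α|)/(52 − |α|)) · t) for all x ∈ X and all t > 0. -/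
/-!
Putting `y = 0` or `x = 0` in the Pexider inequality shows that `f - g` and `f - h` are controlled,
so `f` alone satisfies a controlled quadratic equation, and `f (2x) - 4 f x` is controlled too.
Since doubling the argument costs only a factor `β = |α| < 4` in the control, the increments of
Hyers' sequence `4⁻ⁿ f (2ⁿ x)` are dominated by a geometric progression of ratio `β / 4` and sum
`1 / (4 - β)`; its fuzzy limit `Q` is within that distance of `f`, hence also near `g` and `h`.
The quadratic defect of `4⁻ⁿ f (2ⁿ ·)` tends to `0`, and a map with `Q (2x) = 4 Q x` near `f` is
unique because rescaling by `4ⁿ` beats `βⁿ`.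
-/

open Filter Finset

/-- The control function `N″ x t = min {N′(φ(x,x))(t/3), N′(φ(x,0))(t/3), N′(φ(0,x))(t/3)}`. -/
noncomputable def Ndd {X Z : Type*} [Zero X] (N' : Z → ℝ → ℝ) (φ : X × X → Z) (x : X) (t : ℝ) : ℝ :=
  min (min (N' (φ (x, x)) (t / 3)) (N' (φ (x, 0)) (t / 3))) (N' (φ (0, x)) (t / 3))

open scoped Topology

section FuzzyNorm

variable {Y : Type*} [AddCommGroup Y] [Module ℝ Y] {N : Y → ℝ → ℝ}

namespace IsFuzzyNorm

lemma apply_inv_smul (hN : IsFuzzyNorm N) {c : ℝ} (hc : 0 < c) (x : Y) (t : ℝ) :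
    N (c⁻¹ • x) t = N x (c * t) := by
  rw [hN.smul_eq _ _ _ (inv_ne_zero hc.ne'), abs_of_pos (inv_pos.2 hc), div_inv_eq_mul, mul_comm]

lemma apply_two_nsmul (hN : IsFuzzyNorm N) (x : Y) (t : ℝ) : N (2 • x) t = N x (t / 2) := by
  rw [← ofNat_smul_eq_nsmul ℝ, hN.smul_eq _ _ _ two_ne_zero, abs_two]

lemma apply_sub_comm (hN : IsFuzzyNorm N) (x y : Y) (t : ℝ) : N (x - y) t = N (y - x) t := by
  simpa using hN.smul_eq (-1) (y - x) t (by norm_num)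

lemma le_apply_add (hN : IsFuzzyNorm N) {x y : Y} {d s t : ℝ} (hx : d ≤ N x s) (hy : d ≤ N y t) :
    d ≤ N (x + y) (s + t) :=
  (le_min hx hy).trans (hN.min_le_add x y s t)

lemma le_apply_sub (hN : IsFuzzyNorm N) {x y : Y} {d s t : ℝ} (hx : d ≤ N x s) (hy : d ≤ N y t) :
    d ≤ N (x - y) (s + t) := by
  have hy' : d ≤ N (0 - y) t := by rwa [hN.apply_sub_comm, sub_zero]
  simpa only [zero_sub, ← sub_eq_add_neg] using hN.le_apply_add hx hy'

lemma le_apply_sub_trans (hN : IsFuzzyNorm N) {x y z : Y} {d s t : ℝ} (hxy : d ≤ N (x - y) s)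
    (hyz : d ≤ N (y - z) t) : d ≤ N (x - z) (s + t) := by
  simpa using hN.le_apply_add hxy hyz

lemma le_apply_sum (hN : IsFuzzyNorm N) {ι : Type*} {s : Finset ι} (hs : s.Nonempty) {x : ι → Y}
    {c : ι → ℝ} {d : ℝ} (h : ∀ i ∈ s, d ≤ N (x i) (c i)) : d ≤ N (∑ i ∈ s, x i) (∑ i ∈ s, c i) := by
  induction hs using Finset.Nonempty.cons_induction with
  | singleton i => simpa using h i
  | cons i s hi _ ih =>
    rw [sum_cons, sum_cons]
    exact hN.le_apply_add (h i (mem_cons_self i s)) (ih fun j hj => h j (mem_cons_of_mem hj))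

-- The range must be nonempty: `N 0 0 = 0`.
lemma le_apply_sub_sum_Ico (hN : IsFuzzyNorm N) {a : ℕ → Y} {c : ℕ → ℝ} {d : ℝ}
    (h : ∀ n, d ≤ N (a (n + 1) - a n) (c n)) {m n : ℕ} (hmn : m < n) :
    d ≤ N (a n - a m) (∑ k ∈ Ico m n, c k) := by
  rw [← sum_Ico_sub a hmn.le]
  exact hN.le_apply_sum (nonempty_Ico.2 hmn) fun k _ => h k

lemma fuzzyCauchy_of_summable (hN : IsFuzzyNorm N) {a : ℕ → Y} {c : ℕ → ℝ} {D : ℝ → ℝ}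
    (hc : Summable c) (hD : Tendsto D atTop (𝓝 1))
    (h : ∀ n v, D v ≤ N (a (n + 1) - a n) (v * c n)) : FuzzyCauchy N a := by
  intro ε hε t ht
  obtain ⟨v, hεv, hv⟩ :=
    ((hD.eventually_const_lt (sub_lt_self 1 hε)).and (eventually_gt_atTop 0)).exists
  obtain ⟨n₀, hn₀⟩ :=
    Metric.cauchySeq_iff.1 hc.hasSum.tendsto_sum_nat.cauchySeq (t / v) (div_pos ht hv)
  refine ⟨n₀, fun n hn p hp => hεv.trans_le ?_⟩
  have htail : ∑ k ∈ Ico n (n + p), c k < t / v := by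
    rw [sum_Ico_eq_sub c (Nat.le_add_right n p)]
    exact (le_abs_self _).trans_lt (hn₀ (n + p) (by lia) n hn)
  refine (hN.le_apply_sub_sum_Ico (fun k => h k v) (Nat.lt_add_of_pos_right hp)).trans
    (hN.mono _ ?_)
  rw [← mul_sum, mul_comm]
  exact ((lt_div_iff₀ hv).1 htail).le

end IsFuzzyNorm

namespace FuzzyTendsto

protected lemma add (hN : IsFuzzyNorm N) {a b : ℕ → Y} {x y : Y} (ha : FuzzyTendsto N a x)
    (hb : FuzzyTendsto N b y) : FuzzyTendsto N (fun n => a n + b n) (x + y) := by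
  intro t ht
  have hmin := (ha (t / 2) (half_pos ht)).min (hb (t / 2) (half_pos ht))
  rw [min_self] at hmin
  refine tendsto_of_tendsto_of_tendsto_of_le_of_le hmin tendsto_const_nhds (fun n => ?_)
    fun n => hN.le_one _ _
  simpa [add_sub_add_comm] using hN.min_le_add (a n - x) (b n - y) (t / 2) (t / 2)

protected lemma neg (hN : IsFuzzyNorm N) {a : ℕ → Y} {x : Y} (ha : FuzzyTendsto N a x) :
    FuzzyTendsto N (fun n => -a n) (-x) := fun t ht =>
  (ha t ht).congr fun n => by rw [neg_sub_neg, hN.apply_sub_comm]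

protected lemma sub (hN : IsFuzzyNorm N) {a b : ℕ → Y} {x y : Y} (ha : FuzzyTendsto N a x)
    (hb : FuzzyTendsto N b y) : FuzzyTendsto N (fun n => a n - b n) (x - y) := by
  simpa only [sub_eq_add_neg] using ha.add hN (hb.neg hN)

-- `s < t` cannot be relaxed to `s ≤ t`, since `N x` need not be continuous.
lemma le_apply_sub (hN : IsFuzzyNorm N) {a : ℕ → Y} {x y : Y} {d s t : ℝ} (ha : FuzzyTendsto N a x)
    (h : ∀ᶠ n in atTop, d ≤ N (a n - y) s) (hst : s < t) : d ≤ N (x - y) t := by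
  have hd : d ≤ 1 := h.exists.elim fun n hn => hn.trans (hN.le_one _ _)
  have hmin : Tendsto (fun n => min (N (a n - x) (t - s)) d) atTop (𝓝 d) := by
    simpa only [min_eq_right hd] using
      (ha (t - s) (sub_pos.2 hst)).min (tendsto_const_nhds (x := d))
  refine le_of_tendsto hmin (h.mono fun n hn => ?_)
  rw [hN.apply_sub_comm (a n)]
  simpa only [sub_add_cancel] using hN.le_apply_sub_trans
    (min_le_left (N (x - a n) (t - s)) d) ((min_le_right _ _).trans hn)

lemma unique (hN : IsFuzzyNorm N) {a : ℕ → Y} {x y : Y} (hx : FuzzyTendsto N a x)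
    (hy : FuzzyTendsto N a y) : x = y := by
  rw [← sub_eq_zero, hN.eq_zero_iff]
  intro t ht
  have hconst := (hx.sub hN hy) t ht
  simp only [sub_self] at hconst
  rw [← tendsto_nhds_unique tendsto_const_nhds hconst, hN.apply_sub_comm 0, sub_zero]

lemma le_apply_sub_of_hasSum (hN : IsFuzzyNorm N) {a : ℕ → Y} {x : Y} {c : ℕ → ℝ} {d S t : ℝ}
    (ha : FuzzyTendsto N a x) (hc : HasSum c S) (h : ∀ n, d ≤ N (a (n + 1) - a n) (c n))
    (hSt : S < t) : d ≤ N (x - a 0) t := by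
  obtain ⟨s, hSs, hst⟩ := exists_between hSt
  refine ha.le_apply_sub hN ?_ hst
  filter_upwards [hc.tendsto_sum_nat.eventually_lt_const hSs, eventually_gt_atTop 0] with n hns hn
  rw [range_eq_Ico] at hns
  exact (hN.le_apply_sub_sum_Ico h hn).trans (hN.mono _ hns.le)

end FuzzyTendsto

end FuzzyNorm

/-- A family of control functions `M w`, tending to `1` at infinity, for which doubling the argument
`w` costs at most a factor `β` in the threshold `t`. The bound `N′ (φ(x, y)) t` with
`φ(2x, 2y) = α φ(x, y)` is the case `W = X × X`, `β = |α|`. -/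
structure IsDoublingControl {W : Type*} [AddMonoid W] (β : ℝ) (M : W → ℝ → ℝ) : Prop where
  le_two_nsmul : ∀ (w : W) (t : ℝ), M w t ≤ M (2 • w) (β * t)
  tendsto_one : ∀ w : W, Tendsto (M w) atTop (𝓝 1)

namespace IsDoublingControl

variable {V W : Type*} [AddMonoid V] [AddMonoid W] {β ρ : ℝ} {M M' : W → ℝ → ℝ}

lemma comp (hM : IsDoublingControl β M) (e : V →+ W) : IsDoublingControl β fun v => M (e v) where
  le_two_nsmul v t := by simpa only [map_nsmul] using hM.le_two_nsmul (e v) t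
  tendsto_one v := hM.tendsto_one (e v)

lemma comp_diag {M : W × W → ℝ → ℝ} (hM : IsDoublingControl β M) :
    IsDoublingControl β fun w => M (w, w) :=
  hM.comp ((AddMonoidHom.id W).prod (AddMonoidHom.id W))

protected lemma min (hM : IsDoublingControl β M) (hM' : IsDoublingControl β M') :
    IsDoublingControl β fun w t => min (M w t) (M' w t) where
  le_two_nsmul w t := min_le_min (hM.le_two_nsmul w t) (hM'.le_two_nsmul w t)
  tendsto_one w := by simpa only [min_self] using (hM.tendsto_one w).min (hM'.tendsto_one w)

lemma div_const (hM : IsDoublingControl β M) {c : ℝ} (hc : 0 < c) :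
    IsDoublingControl β fun w t => M w (t / c) where
  le_two_nsmul w t := by simpa only [mul_div_assoc] using hM.le_two_nsmul w (t / c)
  tendsto_one w := (hM.tendsto_one w).comp (tendsto_id.atTop_div_const hc)

lemma le_two_pow_nsmul (hM : IsDoublingControl β M) (n : ℕ) (w : W) (t : ℝ) :
    M w t ≤ M (2 ^ n • w) (β ^ n * t) := by
  induction n with
  | zero => simp
  | succ n ih =>
    rw [pow_succ' 2, mul_nsmul', pow_succ', mul_assoc]
    exact ih.trans (hM.le_two_nsmul _ _)

lemma tendsto_one_of_le (hM : IsDoublingControl β M) (hβ : 0 < β) (hβρ : β < ρ) {w : W} {t : ℝ}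
    (ht : 0 < t) {u : ℕ → ℝ} (hMu : ∀ n, M (2 ^ n • w) (ρ ^ n * t) ≤ u n) (hu : ∀ n, u n ≤ 1) :
    Tendsto u atTop (𝓝 1) := by
  have hscale : Tendsto (fun n : ℕ => (ρ / β) ^ n * t) atTop atTop :=
    (tendsto_pow_atTop_atTop_of_one_lt ((one_lt_div hβ).2 hβρ)).atTop_mul_const ht
  refine tendsto_of_tendsto_of_tendsto_of_le_of_le ((hM.tendsto_one w).comp hscale)
    tendsto_const_nhds (fun n => ?_) hu
  calc
    M w ((ρ / β) ^ n * t) ≤ M (2 ^ n • w) (β ^ n * ((ρ / β) ^ n * t)) := hM.le_two_pow_nsmul n w _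
    _ = M (2 ^ n • w) (ρ ^ n * t) := by rw [← mul_assoc, ← mul_pow, mul_div_cancel₀ _ hβ.ne']
    _ ≤ u n := hMu n

end IsDoublingControl

lemma IsFuzzyNorm.isDoublingControl_comp {W Z : Type*} [AddMonoid W] [AddCommGroup Z] [Module ℝ Z]
    {N : Z → ℝ → ℝ} (hN : IsFuzzyNorm N) {α : ℝ} (hα : 0 < |α|) {φ : W → Z}
    (hφ : ∀ w, φ (2 • w) = α • φ w) : IsDoublingControl |α| fun w => N (φ w) where
  le_two_nsmul w t := by
    rw [hφ, hN.smul_eq _ _ _ (abs_pos.1 hα), mul_div_cancel_left₀ _ hα.ne']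
  tendsto_one w := hN.tendsto_one (φ w)

section Hyers

variable {X Y : Type*} [AddMonoid X] [AddCommGroup Y] [Module ℝ Y]

/-- Hyers' sequence `ρ⁻ⁿ f (2ⁿ x)`, whose limit solves `Q (2x) = ρ Q x`; quadratic maps correspond
to `ρ = 4`. -/
noncomputable def hyersSeq (ρ : ℝ) (f : X → Y) (n : ℕ) (x : X) : Y :=
  (ρ ^ n)⁻¹ • f (2 ^ n • x)

lemma hyersSeq_zero (ρ : ℝ) (f : X → Y) (x : X) : hyersSeq ρ f 0 x = f x := by
  simp [hyersSeq]

lemma hyersSeq_succ_sub {ρ : ℝ} (hρ : ρ ≠ 0) (f : X → Y) (n : ℕ) (x : X) :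
    hyersSeq ρ f (n + 1) x - hyersSeq ρ f n x =
      (ρ ^ (n + 1))⁻¹ • (f (2 • 2 ^ n • x) - ρ • f (2 ^ n • x)) := by
  have hcancel : (ρ ^ (n + 1))⁻¹ * ρ = (ρ ^ n)⁻¹ := by
    rw [pow_succ, mul_inv, inv_mul_cancel_right₀ hρ]
  rw [hyersSeq, hyersSeq, pow_succ' 2, mul_nsmul', smul_sub, smul_smul _ ρ, hcancel]

lemma hyersSeq_eq_self {ρ : ℝ} (hρ : ρ ≠ 0) {Q : X → Y} (hQ : ∀ x, Q (2 • x) = ρ • Q x) (n : ℕ)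
    (x : X) : hyersSeq ρ Q n x = Q x := by
  induction n with
  | zero => exact hyersSeq_zero ρ Q x
  | succ n ih => rw [← ih, ← sub_eq_zero, hyersSeq_succ_sub hρ, hQ, sub_self, smul_zero]

variable {N : Y → ℝ → ℝ} {β ρ : ℝ} {D : X → ℝ → ℝ} {f : X → Y}

lemma le_apply_hyersSeq_succ_sub (hN : IsFuzzyNorm N) (hρ : 0 < ρ) (hD : IsDoublingControl β D)
    (hf : ∀ x t, D x t ≤ N (f (2 • x) - ρ • f x) t) (x : X) (n : ℕ) (v : ℝ) :
    D x v ≤ N (hyersSeq ρ f (n + 1) x - hyersSeq ρ f n x) (v * (ρ⁻¹ * (β / ρ) ^ n)) := by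
  have hscale : ρ ^ (n + 1) * (v * (ρ⁻¹ * (β / ρ) ^ n)) = β ^ n * v := by
    rw [div_pow, pow_succ]
    field_simp
  rw [hyersSeq_succ_sub hρ.ne', hN.apply_inv_smul (pow_pos hρ _), hscale]
  exact (hD.le_two_pow_nsmul n x v).trans (hf _ _)

lemma hasSum_inv_mul_div_pow (hβ : 0 ≤ β) (hβρ : β < ρ) :
    HasSum (fun n : ℕ => ρ⁻¹ * (β / ρ) ^ n) (ρ - β)⁻¹ := by
  have hρ : 0 < ρ := hβ.trans_lt hβρ
  have hsum : ρ⁻¹ * (1 - β / ρ)⁻¹ = (ρ - β)⁻¹ := by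
    rw [← mul_inv, mul_one_sub, mul_div_cancel₀ _ hρ.ne']
  rw [← hsum]
  exact (hasSum_geometric_of_lt_one (by positivity) ((div_lt_one hρ).2 hβρ)).mul_left ρ⁻¹

lemma exists_fuzzyTendsto_hyersSeq (hN : IsFuzzyNorm N) (hY : IsFuzzyComplete N) (hβ : 0 ≤ β)
    (hβρ : β < ρ) (hD : IsDoublingControl β D) (hf : ∀ x t, D x t ≤ N (f (2 • x) - ρ • f x) t)
    (x : X) : ∃ y, FuzzyTendsto N (hyersSeq ρ f · x) y ∧
      ∀ v t, v < (ρ - β) * t → D x v ≤ N (y - f x) t := by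
  have hstep := le_apply_hyersSeq_succ_sub hN (hβ.trans_lt hβρ) hD hf x
  have hsum := hasSum_inv_mul_div_pow hβ hβρ
  obtain ⟨y, hy⟩ := hY (hyersSeq ρ f · x)
    (hN.fuzzyCauchy_of_summable hsum.summable (hD.tendsto_one x) hstep)
  refine ⟨y, hy, fun v t hvt => ?_⟩
  rw [← hyersSeq_zero ρ f x]
  refine hy.le_apply_sub_of_hasSum hN (hsum.mul_left v) (hstep · v) ?_
  rwa [← div_eq_mul_inv, div_lt_iff₀' (sub_pos.2 hβρ)]

lemma eq_of_le_apply_sub_of_map_two_nsmul (hN : IsFuzzyNorm N) (hβ : 0 < β) (hβρ : β < ρ)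
    (hD : IsDoublingControl β D) {c : ℝ} (hc : 0 < c) {P Q : X → Y}
    (hP : ∀ x, P (2 • x) = ρ • P x) (hQ : ∀ x, Q (2 • x) = ρ • Q x)
    (hPf : ∀ x t, 0 < t → D x (c * t) ≤ N (P x - f x) t)
    (hQf : ∀ x t, 0 < t → D x (c * t) ≤ N (Q x - f x) t) : P = Q := by
  have hρ : 0 < ρ := hβ.trans hβρ
  funext x
  rw [← sub_eq_zero, hN.eq_zero_iff]
  intro t ht
  have hle (n : ℕ) : D (2 ^ n • x) (ρ ^ n * (c * (t / 2))) ≤ N (P x - Q x) t := by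
    have hs : 0 < ρ ^ n * (t / 2) := by positivity
    have hPn := hPf (2 ^ n • x) _ hs
    have hQn := hQf (2 ^ n • x) _ hs
    rw [hN.apply_sub_comm] at hQn
    rw [← hyersSeq_eq_self hρ.ne' hP n x, ← hyersSeq_eq_self hρ.ne' hQ n x, hyersSeq, hyersSeq,
      ← smul_sub, hN.apply_inv_smul (pow_pos hρ n), mul_left_comm]
    simpa only [← mul_add, add_halves] using hN.le_apply_sub_trans hPn hQn
  exact tendsto_nhds_unique tendsto_const_nhds
    (hD.tendsto_one_of_le hβ hβρ (by positivity) hle fun _ => hN.le_one _ _)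

end Hyers

section Pexider

variable {X Y : Type*} [AddCommGroup X] [AddCommGroup Y]

/-- The defect of the Pexiderized quadratic equation `f (x + y) + f (x - y) = 2 g x + 2 h y`;
`pexiderDefect f f f` is the defect of the quadratic equation itself. -/
def pexiderDefect (f g h : X → Y) (x y : X) : Y :=
  f (x + y) + f (x - y) - 2 • g x - 2 • h y

lemma isQuadratic_iff_pexiderDefect {Q : X → Y} :
    IsQuadratic Q ↔ ∀ x y, pexiderDefect Q Q Q x y = 0 := by
  simp only [IsQuadratic, pexiderDefect, sub_sub, sub_eq_zero]

lemma pexiderDefect_self_eq_sub (f g h : X → Y) (x y : X) :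
    pexiderDefect f f f x y =
      pexiderDefect f g h x y - 2 • (f x - g x) - 2 • (f y - h y) := by
  simp only [pexiderDefect, two_nsmul]
  abel

variable [Module ℝ Y]

lemma pexiderDefect_diag {f : X → Y} (hf0 : f 0 = 0) (x : X) :
    pexiderDefect f f f x x = f (2 • x) - (4 : ℝ) • f x := by
  rw [pexiderDefect, sub_self, hf0, two_nsmul x]
  module

lemma IsQuadratic.map_two_nsmul {Q : X → Y} (hQ : IsQuadratic Q) (x : X) :
    Q (2 • x) = (4 : ℝ) • Q x := by
  have hdefect := isQuadratic_iff_pexiderDefect.1 hQ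
  have hQ0 : Q 0 = 0 := by
    have h0 : (-2 : ℝ) • Q 0 = 0 := by
      rw [← hdefect 0 0, pexiderDefect, add_zero, sub_zero]
      module
    exact (smul_eq_zero_iff_right (by norm_num)).1 h0
  rw [← sub_eq_zero, ← pexiderDefect_diag hQ0, hdefect]

lemma pexiderDefect_hyersSeq (ρ : ℝ) (f : X → Y) (n : ℕ) (x y : X) :
    pexiderDefect (hyersSeq ρ f n) (hyersSeq ρ f n) (hyersSeq ρ f n) x y =
      (ρ ^ n)⁻¹ • pexiderDefect f f f (2 ^ n • x) (2 ^ n • y) := by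
  simp only [pexiderDefect, hyersSeq, smul_add, smul_sub, smul_comm _ 2]

variable {N : Y → ℝ → ℝ} {β : ℝ} {M : X × X → ℝ → ℝ} {f g h : X → Y}

lemma isQuadratic_of_fuzzyTendsto (hN : IsFuzzyNorm N) {F : ℕ → X → Y} {Q : X → Y}
    (hF : ∀ x, FuzzyTendsto N (F · x) (Q x))
    (hdefect : ∀ x y, FuzzyTendsto N (fun n => pexiderDefect (F n) (F n) (F n) x y) 0) :
    IsQuadratic Q := by
  refine isQuadratic_iff_pexiderDefect.2 fun x y => FuzzyTendsto.unique hN ?_ (hdefect x y)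
  simp only [pexiderDefect, two_nsmul]
  exact (((hF (x + y)).add hN (hF (x - y))).sub hN ((hF x).add hN (hF x))).sub hN
    ((hF y).add hN (hF y))

theorem exists_isQuadratic_of_le_apply_pexiderDefect (hN : IsFuzzyNorm N) (hY : IsFuzzyComplete N)
    (hβ : 0 < β) (hβ4 : β < 4) (hM : IsDoublingControl β M) (hf0 : f 0 = 0)
    (hf : ∀ x y t, M (x, y) t ≤ N (pexiderDefect f f f x y) t) :
    ∃ Q : X → Y, IsQuadratic Q ∧ ∀ x v t, v < (4 - β) * t → M (x, x) v ≤ N (Q x - f x) t := by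
  have hf2 (x t) : M (x, x) t ≤ N (f (2 • x) - (4 : ℝ) • f x) t := by
    rw [← pexiderDefect_diag hf0]
    exact hf x x t
  choose Q hQlim hQf using exists_fuzzyTendsto_hyersSeq hN hY hβ.le hβ4 hM.comp_diag hf2
  refine ⟨Q, isQuadratic_of_fuzzyTendsto hN hQlim fun x y t ht => ?_, hQf⟩
  refine hM.tendsto_one_of_le (w := (x, y)) hβ hβ4 ht (fun n => ?_) fun _ => hN.le_one _ _
  simp only [sub_zero]
  rw [pexiderDefect_hyersSeq, hN.apply_inv_smul (by positivity)]
  exact hf _ _ _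

/-- The control on the quadratic defect of `f` obtained from a control `M` on
`pexiderDefect f g h`. On the diagonal this is the paper's `N″` (`Ndd`). -/
noncomputable def pexiderControl (M : X × X → ℝ → ℝ) (p : X × X) (t : ℝ) : ℝ :=
  min (min (M p (t / 3)) (M (p.1, 0) (t / 3))) (M (0, p.2) (t / 3))

lemma IsDoublingControl.pexiderControl (hM : IsDoublingControl β M) :
    IsDoublingControl β (pexiderControl M) :=
  ((hM.div_const three_pos).min
    ((hM.comp ((AddMonoidHom.inl X X).comp (AddMonoidHom.fst X X))).div_const three_pos)).min
    ((hM.comp ((AddMonoidHom.inr X X).comp (AddMonoidHom.snd X X))).div_const three_pos)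

lemma le_apply_sub_of_pexider_left (hN : IsFuzzyNorm N) (hh0 : h 0 = 0)
    (hM : ∀ x y t, M (x, y) t ≤ N (pexiderDefect f g h x y) t) (x : X) (t : ℝ) :
    M (x, 0) t ≤ N (f x - g x) (t / 2) := by
  have hdefect : pexiderDefect f g h x 0 = 2 • (f x - g x) := by
    rw [pexiderDefect, add_zero, sub_zero, hh0, smul_zero, sub_zero, ← two_nsmul, smul_sub]
  rw [← hN.apply_two_nsmul, ← hdefect]
  exact hM x 0 t

lemma le_apply_sub_of_pexider_right (hN : IsFuzzyNorm N) (hf : f.Even) (hg0 : g 0 = 0)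
    (hM : ∀ x y t, M (x, y) t ≤ N (pexiderDefect f g h x y) t) (y : X) (t : ℝ) :
    M (0, y) t ≤ N (f y - h y) (t / 2) := by
  have hdefect : pexiderDefect f g h 0 y = 2 • (f y - h y) := by
    rw [pexiderDefect, zero_add, zero_sub, hf, hg0, smul_zero, sub_zero, ← two_nsmul, smul_sub]
  rw [← hN.apply_two_nsmul, ← hdefect]
  exact hM 0 y t

lemma pexiderControl_le_apply_pexiderDefect_self (hN : IsFuzzyNorm N)
    (hM : ∀ x y t, M (x, y) t ≤ N (pexiderDefect f g h x y) t)
    (hg : ∀ x t, M (x, 0) t ≤ N (f x - g x) (t / 2))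
    (hh : ∀ y t, M (0, y) t ≤ N (f y - h y) (t / 2)) (x y : X) (t : ℝ) :
    pexiderControl M (x, y) t ≤ N (pexiderDefect f f f x y) t := by
  have hgx := hg x (t / 3)
  have hhy := hh y (t / 3)
  rw [← hN.apply_two_nsmul] at hgx hhy
  rw [pexiderDefect_self_eq_sub f g h, ← add_thirds t]
  refine hN.le_apply_sub (hN.le_apply_sub ?_ ?_) ?_ <;> rw [add_thirds]
  · exact ((min_le_left _ _).trans (min_le_left _ _)).trans (hM x y _)
  · exact ((min_le_left _ _).trans (min_le_right _ _)).trans hgx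
  · exact (min_le_right _ _).trans hhy

-- `10 - β = 6 + (4 - β)` accounts for the additional distance `v / 6` from `f` to `g` and `h`.
theorem exists_isQuadratic_of_pexider (hN : IsFuzzyNorm N) (hY : IsFuzzyComplete N)
    (hβ : 0 < β) (hβ4 : β < 4) (hM : IsDoublingControl β M) (hf : f.Even) (hf0 : f 0 = 0)
    (hg0 : g 0 = 0) (hh0 : h 0 = 0)
    (hfgh : ∀ x y t, M (x, y) t ≤ N (pexiderDefect f g h x y) t) :
    ∃ Q : X → Y, IsQuadratic Q ∧
      (∀ x v t, v < (4 - β) * t → pexiderControl M (x, x) v ≤ N (Q x - f x) t) ∧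
      (∀ x v t, (10 - β) * v < 6 * (4 - β) * t → pexiderControl M (x, x) v ≤ N (Q x - g x) t) ∧
      ∀ x v t, (10 - β) * v < 6 * (4 - β) * t → pexiderControl M (x, x) v ≤ N (Q x - h x) t := by
  have hg := le_apply_sub_of_pexider_left hN hh0 hfgh
  have hh := le_apply_sub_of_pexider_right hN hf hg0 hfgh
  obtain ⟨Q, hQ, hQf⟩ := exists_isQuadratic_of_le_apply_pexiderDefect hN hY hβ hβ4
    hM.pexiderControl hf0 (pexiderControl_le_apply_pexiderDefect_self hN hfgh hg hh)
  have htrans {k : X → Y} (hk : ∀ x v, pexiderControl M (x, x) v ≤ N (f x - k x) (v / 3 / 2))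
      (x v t) (hvt : (10 - β) * v < 6 * (4 - β) * t) :
      pexiderControl M (x, x) v ≤ N (Q x - k x) t := by
    have hQx := hQf x v (t - v / 3 / 2) (by linarith)
    simpa only [sub_add_cancel] using hN.le_apply_sub_trans hQx (hk x v)
  exact ⟨Q, hQ, hQf,
    htrans fun x v => ((min_le_left _ _).trans (min_le_right _ _)).trans (hg x (v / 3)),
    htrans fun x v => (min_le_right _ _).trans (hh x (v / 3))⟩

theorem fuzzy_stability_pexider_even_general (hN : IsFuzzyNorm N) (hY : IsFuzzyComplete N)
    (hβ : 0 < β) (hβ4 : β < 4) (hM : IsDoublingControl β M) (hf : f.Even) (hf0 : f 0 = 0)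
    (hg0 : g 0 = 0) (hh0 : h 0 = 0)
    (hfgh : ∀ x y t, M (x, y) t ≤ N (pexiderDefect f g h x y) t) :
    ∃! Q : X → Y, IsQuadratic Q ∧
      (∀ x t, 0 < t → pexiderControl M (x, x) ((4 - β) / 16 * t) ≤ N (Q x - f x) t) ∧
      (∀ x t, 0 < t →
        pexiderControl M (x, x) ((12 - 3 * β) / (52 - β) * t) ≤ N (Q x - g x) t) ∧
      ∀ x t, 0 < t →
        pexiderControl M (x, x) ((12 - 3 * β) / (52 - β) * t) ≤ N (Q x - h x) t := by
  obtain ⟨Q, hQ, hQf, hQg, hQh⟩ :=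
    exists_isQuadratic_of_pexider hN hY hβ hβ4 hM hf hf0 hg0 hh0 hfgh
  have hconst_f {t : ℝ} (ht : 0 < t) : (4 - β) / 16 * t < (4 - β) * t :=
    mul_lt_mul_of_pos_right (by linarith) ht
  have hconst_gh {t : ℝ} (ht : 0 < t) :
      (10 - β) * ((12 - 3 * β) / (52 - β) * t) < 6 * (4 - β) * t := by
    rw [← mul_assoc, ← mul_div_assoc]
    refine mul_lt_mul_of_pos_right ?_ ht
    rw [div_lt_iff₀ (by linarith)]
    nlinarith
  refine ⟨Q, ⟨hQ, fun x t ht => hQf x _ t (hconst_f ht), fun x t ht => hQg x _ t (hconst_gh ht),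
    fun x t ht => hQh x _ t (hconst_gh ht)⟩, ?_⟩
  rintro P ⟨hP, hPf, -, -⟩
  exact eq_of_le_apply_sub_of_map_two_nsmul hN hβ hβ4 hM.pexiderControl.comp_diag
    (div_pos (sub_pos.2 hβ4) (by norm_num)) hP.map_two_nsmul hQ.map_two_nsmul hPf
    fun x t ht => hQf x _ t (hconst_f ht)

end Pexider

/-- Proposition 3.2: fuzzy stability of the Pexiderized quadratic equation for
even functions vanishing at `0`; one obtains a unique quadratic mapping `Q`. -/
theorem fuzzy_stability_pexider_even
    {X Y Z : Type*} [AddCommGroup X] [Module ℝ X]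
    [AddCommGroup Y] [Module ℝ Y] [AddCommGroup Z] [Module ℝ Z]
    (N : Y → ℝ → ℝ) (N' : Z → ℝ → ℝ)
    (hN : IsFuzzyNorm N) (hYcomplete : IsFuzzyComplete N) (hN' : IsFuzzyNorm N')
    (α : ℝ) (hα0 : 0 < |α|) (hα4 : |α| < 4)
    (φ : X × X → Z)
    (hφ : ∀ x y : X, φ (2 • x, 2 • y) = α • φ (x, y))
    (f g h : X → Y)
    (hfeven : ∀ x : X, f (-x) = f x)
    (hgeven : ∀ x : X, g (-x) = g x)
    (hheven : ∀ x : X, h (-x) = h x)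
    (hf0 : f 0 = 0) (hg0 : g 0 = 0) (hh0 : h 0 = 0)
    (hineq : ∀ x y : X, ∀ t : ℝ,
      N' (φ (x, y)) t ≤ N (f (x + y) + f (x - y) - 2 • g x - 2 • h y) t) :
    ∃! Q : X → Y, IsQuadratic Q ∧
      (∀ x : X, ∀ t : ℝ, 0 < t →
        Ndd N' φ x ((4 - |α|) / 16 * t) ≤ N (Q x - f x) t) ∧
      (∀ x : X, ∀ t : ℝ, 0 < t →
        Ndd N' φ x ((12 - 3 * |α|) / (52 - |α|) * t) ≤ N (Q x - g x) t) ∧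
      (∀ x : X, ∀ t : ℝ, 0 < t →
        Ndd N' φ x ((12 - 3 * |α|) / (52 - |α|) * t) ≤ N (Q x - h x) t) :=
  fuzzy_stability_pexider_even_general hN hYcomplete hα0 hα4
    (hN'.isDoublingControl_comp hα0 fun p => hφ p.1 p.2) hfeven hf0 hg0 hh0 hineq
end
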